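/- Let f₀, f₁, …, f_p : ℝⁿ → ℝ be nonconstant polynomial functions, let S := {x ∈ ℝⁿ : f₁(x) ≤ 0, …, f_p(x) ≤ 0} be nonempty, assume f₀ is bounded from below on S, and set f* := inf_{x ∈ S} f₀(x). Assume the Mangasarian–Fromovitz property at infinity ((MF)∞) holds for the problem inf_{x ∈ S} f₀(x). If f₀ does not attain its infimum f* on S, then either f* = 0 or there exist a nonempty set J ⊆ {1, …, n}, a vector q ∈ ℝⁿ with min_{j ∈ J} q_j < 0, a point x* ∈ ℝⁿ, and scalars λ*₀, λ*₁, …, λ*_p satisfying, with Δ_i := Δ(q, Γ(f_i)): (i) x*_j = 0 ⟺ j ∉ J; (ii) f* = f_{0,Δ₀}(x*), Δ₀ ⊆ ℝ^J, and d(q, Γ(f₀)) = 0; (iii) λ*₀ ∇f_{0,Δ₀}(x*) + Σ_{i=1}^p λ*_i ∇f_{i,Δ_i}(x*) = 0; (iv) f_{i,Δ_i}(x*) ≤ 0 and λ*_i f_{i,Δ_i}(x*) = 0 for i = 1, …, p; (v) all λ*_i are nonnegative and not all zero; and moreover such that if there exists a nonzero vector v ∈ ℝⁿ with ⟨∇f_{i,Δ_i}(x*),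 v⟩ < 0 for every i ∈ {1, …, p} with f_{i,Δ_i}(x*) = 0 and f_i restricted to ℝ^J not constant, then the multipliers can be chosen with λ*₀ = 1. -/

import Mathlib

open MvPolynomial Set Filter
open scoped Classical

noncomputable section

/-- The exponent vector of a monomial, viewed as a point of `ℝⁿ`. -/
def expVec {n : ℕ} (κ : Fin n →₀ ℕ) : Fin n → ℝ := fun j => (κ j : ℝ)

/-- The Newton polyhedron at infinity `Γ(f)`: the convex hull of the support of `f`. -/
def NewtonPolyhedron {n : ℕ} (f : MvPolynomial (Fin n) ℝ) : Set (Fin n → ℝ) :=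
  convexHull ℝ (expVec '' (f.support : Set (Fin n →₀ ℕ)))

/-- `d(q, Γ(f)) := min {⟨q, κ⟩ : κ ∈ Γ(f)}`. -/
def NewtonD {n : ℕ} (f : MvPolynomial (Fin n) ℝ) (q : Fin n → ℝ) : ℝ :=
  sInf ((fun κ : Fin n → ℝ => ∑ j, q j * κ j) '' NewtonPolyhedron f)

/-- `Δ(q, Γ(f)) := {κ ∈ Γ(f) : ⟨q, κ⟩ = d(q, Γ(f))}`. -/
def NewtonFace {n : ℕ} (f : MvPolynomial (Fin n) ℝ) (q : Fin n → ℝ) : Set (Fin n → ℝ) :=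
  {κ ∈ NewtonPolyhedron f | ∑ j, q j * κ j = NewtonD f q}

/-- For a set `Δ ⊆ ℝⁿ`, the polynomial `f_Δ := ∑_{κ ∈ Δ} a_κ x^κ`. -/
def facePoly {n : ℕ} (f : MvPolynomial (Fin n) ℝ) (Δ : Set (Fin n → ℝ)) :
    MvPolynomial (Fin n) ℝ :=
  ∑ κ ∈ f.support.filter (fun κ => expVec κ ∈ Δ), monomial κ (f.coeff κ)

/-- `ℝ^J := {x ∈ ℝⁿ : x_j = 0 for all j ∉ J}`. -/
def RJ {n : ℕ} (J : Set (Fin n)) : Set (Fin n → ℝ) := {x | ∀ j ∉ J, x j = 0}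

/-- The restriction of `f` to `ℝ^J` is not constant. -/
def NotConstOn {n : ℕ} (f : MvPolynomial (Fin n) ℝ) (J : Set (Fin n)) : Prop :=
  ∃ x ∈ RJ J, ∃ y ∈ RJ J, eval x f ≠ eval y f

/-- The Mangasarian–Fromovitz property at infinity for `inf {f 0 x : f i x ≤ 0, i = 1,…,p}`. -/
def MFinfty {n p : ℕ} (f : Fin (p + 1) → MvPolynomial (Fin n) ℝ) : Prop :=
  ∀ J : Set (Fin n), J.Nonempty → ∀ q x : Fin n → ℝ,
    NewtonD (f 0) q < 0 →
    (∀ i, NotConstOn (f i) J → NewtonFace (f i) q ⊆ RJ J) →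
    (∀ j, x j = 0 ↔ j ∉ J) →
    (∀ i, i ≠ 0 → eval x (facePoly (f i) (NewtonFace (f i) q)) ≤ 0) →
    ∃ v : Fin n → ℝ, v ≠ 0 ∧ ∀ i, NotConstOn (f i) J →
      eval x (facePoly (f i) (NewtonFace (f i) q)) = 0 →
      ∑ j, eval x (pderiv j (facePoly (f i) (NewtonFace (f i) q))) * v j < 0

/-- Kouchnirenko non-degeneracy at infinity. -/
def NondegenerateAtInfinity {n : ℕ} (f : MvPolynomial (Fin n) ℝ) : Prop :=
  ∀ q : Fin n → ℝ, NewtonD f q < 0 →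
    ∀ x : Fin n → ℝ, (∀ j, x j ≠ 0) →
      ¬ ∀ j, eval x (pderiv j (facePoly f (NewtonFace f q))) = 0

/-- A convenient polynomial. -/
def Convenient {n : ℕ} (f : MvPolynomial (Fin n) ℝ) : Prop :=
  ∀ j : Fin n, ∃ c : ℝ, 0 < c ∧ c • (Pi.single j 1 : Fin n → ℝ) ∈ NewtonPolyhedron f

/-- A bad face of `Γ(f)`. -/
def BadFace {n : ℕ} (f : MvPolynomial (Fin n) ℝ) (Δ : Set (Fin n → ℝ)) : Prop :=
  (∃ q : Fin n → ℝ, Δ = NewtonFace f q) ∧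
  (0 : Fin n → ℝ) ∈ affineSpan ℝ Δ ∧
  ∃ q : Fin n → ℝ, (∃ i j, q i * q j < 0) ∧
    {κ : Fin n → ℝ | ∑ j, q j * κ j = 0} ∩ NewtonPolyhedron f = Δ

/-- The set of critical values of `f`. -/
def K0 {n : ℕ} (f : MvPolynomial (Fin n) ℝ) : Set ℝ :=
  {c | ∃ x : Fin n → ℝ, (∀ j, eval x (pderiv j f) = 0) ∧ eval x f = c}

/-- `Σ∞(f)`: critical values of `f_Δ` over all bad faces `Δ`. -/
def SigmaInfty {n : ℕ} (f : MvPolynomial (Fin n) ℝ) : Set ℝ :=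
  {c | ∃ Δ : Set (Fin n → ℝ), BadFace f Δ ∧ ∃ x : Fin n → ℝ,
    (∀ j, eval x (pderiv j (facePoly f Δ)) = 0) ∧ eval x (facePoly f Δ) = c}

/-- `Σ∞'(f)`: critical values of `f_Δ` on `(ℝ ∖ {0})ⁿ` over all bad faces `Δ`. -/
def SigmaInfty' {n : ℕ} (f : MvPolynomial (Fin n) ℝ) : Set ℝ :=
  {c | ∃ Δ : Set (Fin n → ℝ), BadFace f Δ ∧ ∃ x : Fin n → ℝ, (∀ j, x j ≠ 0) ∧
    (∀ j, eval x (pderiv j (facePoly f Δ)) = 0) ∧ eval x (facePoly f Δ) = c}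

/-- The Euclidean norm on `Fin k → ℝ`. -/
def euclNorm {k : ℕ} (x : Fin k → ℝ) : ℝ := Real.sqrt (∑ j, (x j) ^ 2)

/-- Basic semialgebraic subsets of `ℝ^m`. -/
def BasicSA {m : ℕ} (A : Set (Fin m → ℝ)) : Prop :=
  ∃ (k l : ℕ) (g : Fin k → MvPolynomial (Fin m) ℝ) (h : Fin l → MvPolynomial (Fin m) ℝ),
    A = {x | (∀ i, eval x (g i) = 0) ∧ ∀ i, 0 < eval x (h i)}

/-- Semialgebraic subsets of `ℝ^m`: finite unions of basic semialgebraic sets. -/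
def IsSA {m : ℕ} (A : Set (Fin m → ℝ)) : Prop :=
  ∃ (N : ℕ) (B : Fin N → Set (Fin m → ℝ)), (∀ i, BasicSA (B i)) ∧ A = ⋃ i, B i

/-- A semialgebraic scalar function on a domain `D ⊆ ℝ` (graph is semialgebraic). -/
def IsSAFunOn (D : Set ℝ) (f : ℝ → ℝ) : Prop :=
  IsSA {z : Fin 2 → ℝ | z 0 ∈ D ∧ z 1 = f (z 0)}

/-- A semialgebraic curve `D → ℝⁿ` (graph is semialgebraic). -/
def IsSACurve {n : ℕ} (D : Set ℝ) (φ : ℝ → Fin n → ℝ) : Prop :=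
  IsSA {z : Fin (n + 1) → ℝ | z 0 ∈ D ∧ ∀ j : Fin n, z j.succ = φ (z 0) j}

/-- A semialgebraic map `ℝⁿ → ℝ^p` (graph is semialgebraic). -/
def IsSAMap {n p : ℕ} (F : (Fin n → ℝ) → (Fin p → ℝ)) : Prop :=
  IsSA {z : Fin (n + p) → ℝ |
    (fun i : Fin p => z (Fin.natAdd n i)) = F (fun j : Fin n => z (Fin.castAdd p j))}

/-! ### Tropical limits along an ultrafilter -/

theorem ultra_real (U : Ultrafilter ℕ) (a : ℕ → ℝ) :
    (∃ l, Tendsto a U (nhds l)) ∨ Tendsto a U atTop ∨ Tendsto a U atBot := by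
  by_cases h1 : ∃ C, ∀ᶠ k in (U : Filter ℕ), |a k| ≤ C
  · left
    obtain ⟨C, hC⟩ := h1
    have : (Ultrafilter.map a U : Filter ℝ) ≤ Filter.principal (Icc (-C) C) := by
      rw [Filter.le_principal_iff]
      exact hC.mono fun k hk => abs_le.1 hk
    obtain ⟨l, _, hl⟩ := isCompact_Icc.ultrafilter_le_nhds _ this
    exact ⟨l, hl⟩
  · right
    push Not at h1
    by_cases h2 : ∀ᶠ k in (U : Filter ℕ), 0 ≤ a k
    · left
      rw [Filter.tendsto_atTop]
      intro b
      have := h1 b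
      filter_upwards [this, h2] with k hk hk2
      rw [abs_of_nonneg hk2] at hk
      exact hk.le
    · right
      have h2 := Ultrafilter.eventually_not.2 h2
      rw [Filter.tendsto_atBot]
      intro b
      have := h1 (-b)
      filter_upwards [this, h2] with k hk hk2
      rw [abs_of_neg (by linarith)] at hk
      linarith

theorem gen_inverse {E F : Type*} [AddCommGroup E] [Module ℝ E] [AddCommGroup F] [Module ℝ F]
    (L : E →ₗ[ℝ] F) : ∃ G : F →ₗ[ℝ] E, ∀ x, L (G (L x)) = L x := by
  obtain ⟨g, hg⟩ := L.rangeRestrict.exists_rightInverse_of_surjective L.range_rangeRestrict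
  obtain ⟨G, hG⟩ := LinearMap.exists_extend g
  refine ⟨G, fun x => ?_⟩
  have h1 : G (L x) = g (L.rangeRestrict x) := by
    rw [← hG]; rfl
  rw [h1]
  have := LinearMap.congr_fun hg (L.rangeRestrict x)
  simpa using congrArg Subtype.val this

theorem tropical {n : ℕ} (U : Ultrafilter ℕ) (u : ℕ → Fin n → ℝ) (D : Finset (Fin n → ℝ)) :
    ∃ q c : Fin n → ℝ, ∀ δ ∈ D,
      ((∑ j, q j * δ j = 0) ∧ Tendsto (fun k => ∑ j, u k j * δ j) U (nhds (∑ j, c j * δ j))) ∨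
      ((∑ j, q j * δ j < 0) ∧ Tendsto (fun k => ∑ j, u k j * δ j) U atTop) ∨
      ((0 < ∑ j, q j * δ j) ∧ Tendsto (fun k => ∑ j, u k j * δ j) U atBot) := by
  set D0 := D.filter (fun δ => ∃ l, Tendsto (fun k => ∑ j, u k j * δ j) U (nhds l)) with hD0
  have hl : ∀ δ : D0, ∃ l, Tendsto (fun k => ∑ j, u k j * δ.1 j) U (nhds l) :=
    fun δ => (Finset.mem_filter.1 δ.2).2
  choose l hl using hl
  let L : (Fin n → ℝ) →ₗ[ℝ] (D0 → ℝ) :=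
    { toFun := fun x δ => ∑ j, x j * δ.1 j
      map_add' := by
        intro x y; ext δ; simp [add_mul, Finset.sum_add_distrib]
      map_smul' := by
        intro r x; ext δ; simp [mul_assoc, Finset.mul_sum] }
  obtain ⟨G, hG⟩ := gen_inverse L
  have hGc : Continuous G := LinearMap.continuous_of_finiteDimensional G
  have hLc : Continuous L := LinearMap.continuous_of_finiteDimensional L
  have hLu : Tendsto (fun k => L (u k)) U (nhds l) := by
    rw [tendsto_pi_nhds]
    intro δ
    exact hl δ
  have hGL : Tendsto (fun k => G (L (u k))) U (nhds (G l)) := (hGc.tendsto l).comp hLu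
  have hLGL : Tendsto (fun k => L (G (L (u k)))) U (nhds (L (G l))) := (hLc.tendsto _).comp hGL
  have hc : L (G l) = l := by
    simp_rw [hG] at hLGL
    exact tendsto_nhds_unique hLGL hLu
  have hdot : ∀ δ : Fin n → ℝ, Tendsto (fun k => ∑ j, G (L (u k)) j * δ j) U
      (nhds (∑ j, G l j * δ j)) := by
    intro δ
    apply tendsto_finsetSum
    intro j _
    exact ((tendsto_pi_nhds.1 hGL) j).mul_const _
  have hev : ∀ δ ∈ D, ∀ᶠ k in (U : Filter ℕ),
      (∑ j, (G (L (u k)) j - u k j) * δ j = 0 ∧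
        Tendsto (fun k => ∑ j, u k j * δ j) U (nhds (∑ j, G l j * δ j))) ∨
      (∑ j, (G (L (u k)) j - u k j) * δ j < 0 ∧
        Tendsto (fun k => ∑ j, u k j * δ j) U atTop) ∨
      (0 < ∑ j, (G (L (u k)) j - u k j) * δ j ∧
        Tendsto (fun k => ∑ j, u k j * δ j) U atBot) := by
    intro δ hδ
    by_cases h0 : δ ∈ D0
    · refine Eventually.of_forall fun k => Or.inl ⟨?_, ?_⟩
      · have := congrFun (hG (u k)) ⟨δ, h0⟩
        simp only [sub_mul, Finset.sum_sub_distrib]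
        exact sub_eq_zero.2 this
      · have h1 := hl ⟨δ, h0⟩
        rw [← hc] at h1
        exact h1
    · have h0' : ¬ ∃ l, Tendsto (fun k => ∑ j, u k j * δ j) U (nhds l) := by
        intro h; exact h0 (Finset.mem_filter.2 ⟨hδ, h⟩)
      rcases ultra_real U (fun k => ∑ j, u k j * δ j) with h | h | h
      · exact absurd h h0'
      · have h2 := Filter.tendsto_atTop_add_left_of_le' (U : Filter ℕ) (-(∑ j, G l j * δ j) - 1)
          (f := fun k => -∑ j, G (L (u k)) j * δ j) (g := fun k => ∑ j, u k j * δ j)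
          (by
            have := (hdot δ).eventually (gt_mem_nhds (lt_add_one _))
            filter_upwards [this] with k hk
            linarith) h
        filter_upwards [h2.eventually_gt_atTop 0] with k hk
        refine Or.inr (Or.inl ⟨?_, h⟩)
        simp only [sub_mul, Finset.sum_sub_distrib]
        linarith
      · have h2 := Filter.tendsto_atBot_add_left_of_ge' (U : Filter ℕ) (-(∑ j, G l j * δ j) + 1)
          (f := fun k => -∑ j, G (L (u k)) j * δ j) (g := fun k => ∑ j, u k j * δ j)
          (by
            have := (hdot δ).eventually (lt_mem_nhds (sub_one_lt _))
            filter_upwards [this] with k hk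
            linarith) h
        filter_upwards [h2.eventually_lt_atBot 0] with k hk
        refine Or.inr (Or.inr ⟨?_, h⟩)
        simp only [sub_mul, Finset.sum_sub_distrib]
        linarith
  have hall := (Filter.eventually_all_finset D).2 hev
  obtain ⟨k, hk⟩ := hall.exists
  exact ⟨fun j => G (L (u k)) j - u k j, G l, hk⟩

/-- Pairing of a weight with an exponent. -/
def dotE {n : ℕ} (q : Fin n → ℝ) (κ : Fin n →₀ ℕ) : ℝ := ∑ j, q j * (κ j : ℝ)

/-- The value of a monomial. -/
def mon {n : ℕ} (x : Fin n → ℝ) (κ : Fin n →₀ ℕ) : ℝ := ∏ j, x j ^ κ j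

/-- The exponent only involves the variables in `J`. -/
def InJ {n : ℕ} (J : Set (Fin n)) (κ : Fin n →₀ ℕ) : Prop := ∀ j, j ∉ J → κ j = 0

theorem mon_exp {n : ℕ} {J : Set (Fin n)} {x σ u : Fin n → ℝ}
    (h : ∀ j ∈ J, x j = σ j * Real.exp (u j)) {κ : Fin n →₀ ℕ} (hκ : InJ J κ) :
    mon x κ = mon σ κ * Real.exp (dotE u κ) := by
  unfold mon dotE
  rw [Real.exp_sum, ← Finset.prod_mul_distrib]
  apply Finset.prod_congr rfl
  intro j _
  by_cases hj : j ∈ J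
  · rw [h j hj, mul_pow, mul_comm (u j), Real.exp_nat_mul]
  · simp [hκ j hj]

theorem mon_zero {n : ℕ} {J : Set (Fin n)} {x : Fin n → ℝ}
    (h : ∀ j, j ∉ J → x j = 0) {κ : Fin n →₀ ℕ} (hκ : ¬ InJ J κ) : mon x κ = 0 := by
  unfold InJ at hκ
  push Not at hκ
  obtain ⟨j, hj, hk⟩ := hκ
  exact Finset.prod_eq_zero (Finset.mem_univ j) (by rw [h j hj, zero_pow hk])

theorem dotE_congr {n : ℕ} {J : Set (Fin n)} {q q' : Fin n → ℝ} (h : ∀ j ∈ J, q j = q' j)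
    {κ : Fin n →₀ ℕ} (hκ : InJ J κ) : dotE q κ = dotE q' κ := by
  unfold dotE
  apply Finset.sum_congr rfl
  intro j _
  by_cases hj : j ∈ J
  · rw [h j hj]
  · simp [hκ j hj]

theorem setup {n : ℕ} (U : Ultrafilter ℕ) (x : ℕ → Fin n → ℝ) (F : Finset (Fin n →₀ ℕ))
    (hF0 : (0 : Fin n →₀ ℕ) ∈ F) :
    ∃ (J : Set (Fin n)) (q xs : Fin n → ℝ),
      (∀ j, xs j = 0 ↔ j ∉ J) ∧
      (∀ᶠ k in (U : Filter ℕ), ∀ j, x k j = 0 ↔ j ∉ J) ∧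
      (∀ κ₀ ∈ F, InJ J κ₀ → ∀ κ ∈ F, ¬ InJ J κ →
        dotE q κ₀ + ∑ j, (if j ∈ J then 0 else (κ j : ℝ)) ≤ dotE q κ) ∧
      ∀ κ₀ ∈ F, InJ J κ₀ → ∃ s : ℕ → ℝ, (∀ k, 0 < s k) ∧
        (dotE q κ₀ = 0 → Tendsto s U (nhds 1)) ∧
        (dotE q κ₀ < 0 → Tendsto s U atTop) ∧
        (0 < dotE q κ₀ → Tendsto s U (nhds 0)) ∧
        ∀ κ ∈ F, InJ J κ →
          (dotE q κ = dotE q κ₀ → Tendsto (fun k => mon (x k) κ / s k) U (nhds (mon xs κ))) ∧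
          (dotE q κ₀ < dotE q κ → Tendsto (fun k => mon (x k) κ / s k) U (nhds 0)) := by
  set J : Set (Fin n) := {j | ∀ᶠ k in (U : Filter ℕ), x k j ≠ 0} with hJ
  set σ : Fin n → ℝ := fun j => if ∀ᶠ k in (U : Filter ℕ), 0 < x k j then 1 else -1 with hσ
  set u : ℕ → Fin n → ℝ := fun k j => Real.log |x k j| with hu
  have hxJ : ∀ᶠ k in (U : Filter ℕ), ∀ j, x k j = 0 ↔ j ∉ J := by
    rw [Filter.eventually_all]
    intro j
    by_cases hj : j ∈ J
    · filter_upwards [hj] with k hk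
      simp [hj, hk]
    · have : ∀ᶠ k in (U : Filter ℕ), ¬ (x k j ≠ 0) := Ultrafilter.eventually_not.2 hj
      filter_upwards [this] with k hk
      simpa [hj] using hk
  have hxσ : ∀ᶠ k in (U : Filter ℕ), ∀ j ∈ J, x k j = σ j * Real.exp (u k j) := by
    rw [Filter.eventually_all]
    intro j
    by_cases hp : ∀ᶠ k in (U : Filter ℕ), 0 < x k j
    · filter_upwards [hp] with k hk _
      simp only [hσ, hu, if_pos hp]
      rw [Real.exp_log (abs_pos.2 hk.ne'), abs_of_pos hk, one_mul]
    · have hp' : ∀ᶠ k in (U : Filter ℕ), ¬ (0 < x k j) := Ultrafilter.eventually_not.2 hp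
      filter_upwards [hp', hxJ] with k hk hk2 hj
      have h0 : x k j ≠ 0 := by
        intro h; exact (hk2 j).1 h hj
      simp only [hσ, hu, if_neg hp]
      rw [Real.exp_log (abs_pos.2 h0), abs_of_nonpos (not_lt.1 hk)]
      ring
  obtain ⟨q, c, hqc⟩ := tropical U u
    ((F ×ˢ F).image (fun z => fun j => (z.1 j : ℝ) - (z.2 j : ℝ)))
  have hqc' : ∀ κ ∈ F, ∀ κ₀ ∈ F,
      (dotE q κ = dotE q κ₀ ∧
        Tendsto (fun k => dotE (u k) κ - dotE (u k) κ₀) U (nhds (dotE c κ - dotE c κ₀))) ∨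
      (dotE q κ < dotE q κ₀ ∧ Tendsto (fun k => dotE (u k) κ - dotE (u k) κ₀) U atTop) ∨
      (dotE q κ₀ < dotE q κ ∧ Tendsto (fun k => dotE (u k) κ - dotE (u k) κ₀) U atBot) := by
    intro κ hκ κ₀ hκ₀
    have := hqc (fun j => (κ j : ℝ) - (κ₀ j : ℝ))
      (Finset.mem_image.2 ⟨(κ, κ₀), Finset.mem_product.2 ⟨hκ, hκ₀⟩, rfl⟩)
    simp only [mul_sub, Finset.sum_sub_distrib] at this
    simp only [sub_eq_zero, sub_neg, sub_pos] at this
    exact this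
  -- the modified weight
  obtain ⟨B, hB⟩ : ∃ B : ℝ, ∀ κ ∈ F, |∑ j, (if j ∈ J then q j * (κ j : ℝ) else 0)| ≤ B := by
    obtain ⟨B, hB⟩ := (F.image fun κ => |∑ j, (if j ∈ J then q j * (κ j : ℝ) else 0)|).bddAbove
    exact ⟨B, fun κ hκ => hB (Finset.mem_coe.2 (Finset.mem_image_of_mem _ hκ))⟩
  have hB0 : 0 ≤ B := (abs_nonneg _).trans (hB 0 hF0)
  set Q : Fin n → ℝ := fun j => if j ∈ J then q j else 2 * B + 1 with hQ
  have hQq : ∀ j ∈ J, Q j = q j := fun j hj => by simp [hQ, hj]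
  have hQs : ∀ κ : Fin n →₀ ℕ, dotE Q κ = ∑ j, (if j ∈ J then q j * (κ j : ℝ) else 0) +
      (2 * B + 1) * ∑ j, (if j ∈ J then 0 else (κ j : ℝ)) := by
    intro κ
    unfold dotE
    rw [Finset.mul_sum, ← Finset.sum_add_distrib]
    apply Finset.sum_congr rfl
    intro j _
    by_cases hj : j ∈ J <;> simp [hQ, hj]
  refine ⟨J, Q, fun j => if j ∈ J then σ j * Real.exp (c j) else 0, ?_, hxJ, ?_, ?_⟩
  · intro j
    by_cases hj : j ∈ J
    · simp only [hj, if_true, not_true, iff_false]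
      apply mul_ne_zero _ (Real.exp_pos _).ne'
      simp only [hσ]
      split_ifs <;> norm_num
    · simp [hj]
  · intro κ₀ h₀ hJ₀ κ hκ hJκ
    have h1 := abs_le.1 (hB κ hκ)
    have h2 := abs_le.1 (hB κ₀ h₀)
    have h3 : ∑ j, (if j ∈ J then 0 else (κ₀ j : ℝ)) = 0 := by
      apply Finset.sum_eq_zero
      intro j _
      by_cases hj : j ∈ J
      · simp [hj]
      · simp [hJ₀ j hj]
    have h4 : 1 ≤ ∑ j, (if j ∈ J then 0 else (κ j : ℝ)) := by
      unfold InJ at hJκ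
      push Not at hJκ
      obtain ⟨j, hj, hk⟩ := hJκ
      have h5 : (1 : ℝ) ≤ (if j ∈ J then 0 else (κ j : ℝ)) := by
        rw [if_neg hj]; exact_mod_cast Nat.one_le_iff_ne_zero.2 hk
      refine h5.trans (Finset.single_le_sum (f := fun j => if j ∈ J then 0 else (κ j : ℝ))
        ?_ (Finset.mem_univ j))
      intro i _
      show (0 : ℝ) ≤ (if i ∈ J then 0 else (κ i : ℝ))
      split_ifs
      · exact le_rfl
      · positivity
    rw [hQs κ, hQs κ₀, h3]
    nlinarith
  · intro κ₀ h₀ hJ₀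
    have hd0 : dotE (n := n) q 0 = 0 := by simp [dotE]
    have hdu : ∀ v : Fin n → ℝ, dotE v 0 = 0 := fun v => by simp [dotE]
    refine ⟨fun k => Real.exp (dotE (u k) κ₀ - dotE c κ₀), fun k => Real.exp_pos _, ?_, ?_, ?_, ?_⟩
    · rw [dotE_congr hQq hJ₀]
      intro h
      rcases hqc' κ₀ h₀ 0 hF0 with ⟨_, h2⟩ | ⟨h1, _⟩ | ⟨h1, _⟩
      · simp only [hdu, sub_zero] at h2
        have h3 := h2.sub_const (dotE c κ₀)
        rw [sub_self] at h3
        have := (Real.continuous_exp.tendsto 0).comp h3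
        rwa [Real.exp_zero] at this
      · linarith
      · linarith
    · rw [dotE_congr hQq hJ₀]
      intro h
      rcases hqc' κ₀ h₀ 0 hF0 with ⟨h1, _⟩ | ⟨_, h2⟩ | ⟨h1, _⟩
      · linarith
      · simp only [hdu, sub_zero] at h2
        exact Real.tendsto_exp_atTop.comp (tendsto_atTop_add_const_right _ (-dotE c κ₀) h2)
      · linarith
    · rw [dotE_congr hQq hJ₀]
      intro h
      rcases hqc' κ₀ h₀ 0 hF0 with ⟨h1, _⟩ | ⟨h1, _⟩ | ⟨_, h2⟩
      · linarith
      · linarith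
      · simp only [hdu, sub_zero] at h2
        exact Real.tendsto_exp_atBot.comp (tendsto_atBot_add_const_right _ (-dotE c κ₀) h2)
    · intro κ hκ hJκ
      rw [dotE_congr hQq hJ₀, dotE_congr hQq hJκ]
      have hev : (fun k => mon σ κ * Real.exp ((dotE (u k) κ - dotE (u k) κ₀) + dotE c κ₀))
          =ᶠ[(U : Filter ℕ)]
          fun k => mon (x k) κ / Real.exp (dotE (u k) κ₀ - dotE c κ₀) := by
        filter_upwards [hxσ] with k hk
        rw [mon_exp hk hJκ, mul_div_assoc, ← Real.exp_sub]
        congr 2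
        ring
      have hxs : mon (fun j => if j ∈ J then σ j * Real.exp (c j) else 0) κ =
          mon σ κ * Real.exp (dotE c κ) :=
        mon_exp (fun j hj => if_pos hj) hJκ
      constructor
      · intro h
        rcases hqc' κ hκ κ₀ h₀ with ⟨_, h2⟩ | ⟨h1, _⟩ | ⟨h1, _⟩
        · refine Tendsto.congr' hev ?_
          have h3 := h2.add_const (dotE c κ₀)
          rw [sub_add_cancel] at h3
          rw [hxs]
          exact ((Real.continuous_exp.tendsto _).comp h3).const_mul _
        · linarith
        · linarith
      · intro h
        rcases hqc' κ hκ κ₀ h₀ with ⟨h1, _⟩ | ⟨h1, _⟩ | ⟨_, h2⟩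
        · linarith
        · linarith
        · refine Tendsto.congr' hev ?_
          have h3 := Real.tendsto_exp_atBot.comp (tendsto_atBot_add_const_right _ (dotE c κ₀) h2)
          simpa using h3.const_mul (mon σ κ)

/-! ### Newton polyhedra -/

theorem newton_facts {n : ℕ} (h : MvPolynomial (Fin n) ℝ) (J : Set (Fin n)) (q : Fin n → ℝ)
    (κ₀ : Fin n →₀ ℕ) (h₀ : κ₀ ∈ h.support)
    (hmin : ∀ κ ∈ h.support,
      dotE q κ₀ + ∑ j, (if j ∈ J then 0 else (κ j : ℝ)) ≤ dotE q κ) :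
    NewtonD h q = dotE q κ₀ ∧ NewtonFace h q ⊆ RJ J ∧
      ∀ κ ∈ h.support, (expVec κ ∈ NewtonFace h q ↔ dotE q κ = dotE q κ₀) := by
  have hconv : Convex ℝ {y : Fin n → ℝ | (∀ j, 0 ≤ y j) ∧
      dotE q κ₀ + ∑ j, (if j ∈ J then 0 else y j) ≤ ∑ j, q j * y j} := by
    rintro y ⟨hy1, hy2⟩ z ⟨hz1, hz2⟩ a b ha hb hab
    refine ⟨fun j => ?_, ?_⟩
    · have := hy1 j; have := hz1 j
      simp only [Pi.add_apply, Pi.smul_apply, smul_eq_mul]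
      positivity
    · have e1 : ∑ j, (if j ∈ J then 0 else (a • y + b • z) j) =
          a * ∑ j, (if j ∈ J then 0 else y j) + b * ∑ j, (if j ∈ J then 0 else z j) := by
        rw [Finset.mul_sum, Finset.mul_sum, ← Finset.sum_add_distrib]
        apply Finset.sum_congr rfl
        intro j _
        by_cases hj : j ∈ J <;> simp [hj]
      have e2 : ∑ j, q j * (a • y + b • z) j = a * ∑ j, q j * y j + b * ∑ j, q j * z j := by
        rw [Finset.mul_sum, Finset.mul_sum, ← Finset.sum_add_distrib]
        apply Finset.sum_congr rfl
        intro j _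
        simp only [Pi.add_apply, Pi.smul_apply, smul_eq_mul]
        ring
      rw [e1, e2]
      have e3 : dotE q κ₀ = a * dotE q κ₀ + b * dotE q κ₀ := by rw [← add_mul, hab, one_mul]
      have := mul_le_mul_of_nonneg_left hy2 ha
      have := mul_le_mul_of_nonneg_left hz2 hb
      linarith
  have hsub : NewtonPolyhedron h ⊆ {y : Fin n → ℝ | (∀ j, 0 ≤ y j) ∧
      dotE q κ₀ + ∑ j, (if j ∈ J then 0 else y j) ≤ ∑ j, q j * y j} := by
    apply convexHull_min _ hconv
    rintro _ ⟨κ, hκ, rfl⟩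
    exact ⟨fun j => Nat.cast_nonneg _, hmin κ hκ⟩
  have hmem : ∀ κ ∈ h.support, expVec κ ∈ NewtonPolyhedron h := fun κ hκ =>
    subset_convexHull ℝ _ ⟨κ, hκ, rfl⟩
  have hnn : ∀ y : Fin n → ℝ, (∀ j, 0 ≤ y j) → ∀ j, 0 ≤ (if j ∈ J then 0 else y j) := by
    intro y hy j
    split_ifs
    · exact le_rfl
    · exact hy j
  have hD : NewtonD h q = dotE q κ₀ := by
    unfold NewtonD
    apply IsLeast.csInf_eq
    refine ⟨⟨expVec κ₀, hmem κ₀ h₀, rfl⟩, ?_⟩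
    rintro _ ⟨y, hy, rfl⟩
    obtain ⟨h1, h2⟩ := hsub hy
    have := Finset.sum_nonneg (fun j (_ : j ∈ Finset.univ) => hnn y h1 j)
    simp only
    linarith
  refine ⟨hD, ?_, ?_⟩
  · rintro y ⟨hy, hy2⟩ j hj
    obtain ⟨h1, h2⟩ := hsub hy
    rw [hy2, hD] at h2
    have h3 := Finset.single_le_sum (f := fun j => if j ∈ J then 0 else y j)
      (fun j (_ : j ∈ Finset.univ) => hnn y h1 j) (Finset.mem_univ j)
    simp only [hj, if_false] at h3
    have := h1 j
    linarith
  · intro κ hκ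
    constructor
    · rintro ⟨_, h2⟩
      rw [hD] at h2
      exact h2
    · intro h2
      refine ⟨hmem κ hκ, ?_⟩
      rw [hD]
      exact h2

theorem eval_eq_mon {n : ℕ} (h : MvPolynomial (Fin n) ℝ) (x : Fin n → ℝ) :
    eval x h = ∑ κ ∈ h.support, h.coeff κ * mon x κ := eval_eq' x h

theorem eval_facePoly {n : ℕ} (h : MvPolynomial (Fin n) ℝ) (Δ : Set (Fin n → ℝ)) (x : Fin n → ℝ) :
    eval x (facePoly h Δ) =
      ∑ κ ∈ h.support.filter (fun κ => expVec κ ∈ Δ), h.coeff κ * mon x κ := by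
  unfold facePoly
  rw [map_sum]
  apply Finset.sum_congr rfl
  intro κ _
  rw [eval_monomial, Finsupp.prod_fintype _ _ (by simp)]
  rfl

theorem eval_pderiv_facePoly {n : ℕ} (h : MvPolynomial (Fin n) ℝ) (Δ : Set (Fin n → ℝ))
    (x : Fin n → ℝ) (j : Fin n) :
    eval x (pderiv j (facePoly h Δ)) =
      ∑ κ ∈ h.support.filter (fun κ => expVec κ ∈ Δ),
        h.coeff κ * (κ j : ℝ) * mon x (κ - Finsupp.single j 1) := by
  unfold facePoly
  rw [map_sum, map_sum]
  apply Finset.sum_congr rfl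
  intro κ _
  rw [pderiv_monomial, eval_monomial, Finsupp.prod_fintype _ _ (by simp)]
  rfl

theorem mon_add {n : ℕ} (x : Fin n → ℝ) (κ κ' : Fin n →₀ ℕ) :
    mon x (κ + κ') = mon x κ * mon x κ' := by
  simp [mon, pow_add, Finset.prod_mul_distrib]

theorem mon_single {n : ℕ} (x : Fin n → ℝ) (j : Fin n) (m : ℕ) :
    mon x (Finsupp.single j m) = x j ^ m := by
  unfold mon
  rw [Finset.prod_eq_single j]
  · simp
  · intro i _ hi
    simp [hi.symm]
  · simp

theorem mul_eval_pderiv_facePoly {n : ℕ} (h : MvPolynomial (Fin n) ℝ) (Δ : Set (Fin n → ℝ))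
    (x : Fin n → ℝ) (j : Fin n) :
    x j * eval x (pderiv j (facePoly h Δ)) =
      ∑ κ ∈ h.support.filter (fun κ => expVec κ ∈ Δ), h.coeff κ * (κ j : ℝ) * mon x κ := by
  rw [eval_pderiv_facePoly, Finset.mul_sum]
  apply Finset.sum_congr rfl
  intro κ _
  by_cases hk : κ j = 0
  · simp [hk]
  · have : κ = Finsupp.single j 1 + (κ - Finsupp.single j 1) := by
      rw [add_tsub_cancel_of_le]
      rw [Finsupp.single_le_iff]
      omega
    conv_rhs => rw [this, mon_add, mon_single]
    have h2 : (Finsupp.single j 1 + (κ - Finsupp.single j 1) : Fin n →₀ ℕ) = κ := this.symm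
    rw [h2]
    ring

theorem pderiv_facePoly_zero {n : ℕ} (h : MvPolynomial (Fin n) ℝ) {Δ : Set (Fin n → ℝ)}
    {J : Set (Fin n)} (hΔ : Δ ⊆ RJ J) (x : Fin n → ℝ) (j : Fin n) (hj : j ∉ J) :
    eval x (pderiv j (facePoly h Δ)) = 0 := by
  rw [eval_pderiv_facePoly]
  apply Finset.sum_eq_zero
  intro κ hκ
  have := hΔ (Finset.mem_filter.1 hκ).2 j hj
  have h2 : (κ j : ℝ) = 0 := this
  simp [h2]

/-- Directional derivative of a face polynomial, in logarithmic coordinates. -/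
theorem dir_deriv {n : ℕ} (h : MvPolynomial (Fin n) ℝ) {Δ : Set (Fin n → ℝ)}
    {J : Set (Fin n)} (hΔ : Δ ⊆ RJ J) (x v : Fin n → ℝ) (hx : ∀ j, x j = 0 ↔ j ∉ J) :
    ∑ κ ∈ h.support.filter (fun κ => expVec κ ∈ Δ),
        (h.coeff κ * dotE (fun j => v j / x j) κ) * mon x κ =
      ∑ j, eval x (pderiv j (facePoly h Δ)) * v j := by
  have h1 : ∀ j, eval x (pderiv j (facePoly h Δ)) * v j =
      ∑ κ ∈ h.support.filter (fun κ => expVec κ ∈ Δ),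
        (h.coeff κ * (v j / x j * (κ j : ℝ))) * mon x κ := by
    intro j
    by_cases hj : j ∈ J
    · have hx0 : x j ≠ 0 := fun h0 => (hx j).1 h0 hj
      have : eval x (pderiv j (facePoly h Δ)) * v j =
        (x j * eval x (pderiv j (facePoly h Δ))) * (v j / x j) := by field_simp
      rw [this, mul_eval_pderiv_facePoly, Finset.sum_mul]
      apply Finset.sum_congr rfl
      intro κ _
      ring
    · rw [pderiv_facePoly_zero h hΔ x j hj, (hx j).2 hj]
      simp
  simp_rw [h1]
  rw [Finset.sum_comm]
  apply Finset.sum_congr rfl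
  intro κ _
  unfold dotE
  rw [Finset.mul_sum, Finset.sum_mul]

theorem face_limit {n : ℕ} (U : Ultrafilter ℕ) (x : ℕ → Fin n → ℝ) (F : Finset (Fin n →₀ ℕ))
    (J : Set (Fin n)) (q xs : Fin n → ℝ)
    (hx : ∀ᶠ k in (U : Filter ℕ), ∀ j, x k j = 0 ↔ j ∉ J)
    (hM : ∀ κ₀ ∈ F, InJ J κ₀ → ∀ κ ∈ F, ¬ InJ J κ →
        dotE q κ₀ + ∑ j, (if j ∈ J then 0 else (κ j : ℝ)) ≤ dotE q κ)
    (hlim : ∀ κ₀ ∈ F, InJ J κ₀ → ∃ s : ℕ → ℝ, (∀ k, 0 < s k) ∧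
        (dotE q κ₀ = 0 → Tendsto s U (nhds 1)) ∧
        (dotE q κ₀ < 0 → Tendsto s U atTop) ∧
        (0 < dotE q κ₀ → Tendsto s U (nhds 0)) ∧
        ∀ κ ∈ F, InJ J κ →
          (dotE q κ = dotE q κ₀ → Tendsto (fun k => mon (x k) κ / s k) U (nhds (mon xs κ))) ∧
          (dotE q κ₀ < dotE q κ → Tendsto (fun k => mon (x k) κ / s k) U (nhds 0)))
    (h : MvPolynomial (Fin n) ℝ) (hF : h.support ⊆ F) (hne : ∃ κ ∈ h.support, InJ J κ) :
    NewtonFace h q ⊆ RJ J ∧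
    (∃ κ₀ ∈ h.support, InJ J κ₀ ∧ expVec κ₀ ∈ NewtonFace h q) ∧
    (∀ κ ∈ h.support, expVec κ ∈ NewtonFace h q → dotE q κ = NewtonD h q) ∧
    ∃ s : ℕ → ℝ, (∀ k, 0 < s k) ∧
        (NewtonD h q = 0 → Tendsto s U (nhds 1)) ∧
        (NewtonD h q < 0 → Tendsto s U atTop) ∧
        (0 < NewtonD h q → Tendsto s U (nhds 0)) ∧
        ∀ b : (Fin n →₀ ℕ) → ℝ,
          Tendsto (fun k => (∑ κ ∈ h.support, b κ * mon (x k) κ) / s k) U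
            (nhds (∑ κ ∈ h.support.filter (fun κ => expVec κ ∈ NewtonFace h q),
              b κ * mon xs κ)) := by
  obtain ⟨κ₀, hκ₀, hmin⟩ := Finset.exists_min_image (h.support.filter (fun κ => InJ J κ))
    (dotE q) (by obtain ⟨κ, h1, h2⟩ := hne; exact ⟨κ, Finset.mem_filter.2 ⟨h1, h2⟩⟩)
  obtain ⟨h₀, hJ₀⟩ := Finset.mem_filter.1 hκ₀
  have hmin' : ∀ κ ∈ h.support,
      dotE q κ₀ + ∑ j, (if j ∈ J then 0 else (κ j : ℝ)) ≤ dotE q κ := by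
    intro κ hκ
    by_cases hJκ : InJ J κ
    · have h3 : ∑ j, (if j ∈ J then 0 else (κ j : ℝ)) = 0 := by
        apply Finset.sum_eq_zero
        intro j _
        by_cases hj : j ∈ J
        · simp [hj]
        · simp [hJκ j hj]
      rw [h3, add_zero]
      exact hmin κ (Finset.mem_filter.2 ⟨hκ, hJκ⟩)
    · exact hM κ₀ (hF h₀) hJ₀ κ (hF hκ) hJκ
  obtain ⟨hD, hface, hiff⟩ := newton_facts h J q κ₀ h₀ hmin'
  obtain ⟨s, hs, hs1, hs2, hs3, hs4⟩ := hlim κ₀ (hF h₀) hJ₀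
  rw [hD]
  refine ⟨hface, ⟨κ₀, h₀, hJ₀, (hiff κ₀ h₀).2 rfl⟩, fun κ hκ => (hiff κ hκ).1,
    s, hs, hs1, hs2, hs3, ?_⟩
  intro b
  have e1 : ∀ k, (∑ κ ∈ h.support, b κ * mon (x k) κ) / s k =
      ∑ κ ∈ h.support, b κ * (mon (x k) κ / s k) := by
    intro k
    rw [Finset.sum_div]
    exact Finset.sum_congr rfl fun κ _ => mul_div_assoc _ _ _
  simp_rw [e1]
  rw [Finset.sum_filter]
  apply tendsto_finsetSum
  intro κ hκ
  by_cases hJκ : InJ J κ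
  · obtain ⟨g1, g2⟩ := hs4 κ (hF hκ) hJκ
    split_ifs with hc
    · exact (g1 ((hiff κ hκ).1 hc)).const_mul _
    · have hne : dotE q κ ≠ dotE q κ₀ := fun h' => hc ((hiff κ hκ).2 h')
      have hle := hmin κ (Finset.mem_filter.2 ⟨hκ, hJκ⟩)
      simpa using (g2 (lt_of_le_of_ne hle hne.symm)).const_mul (b κ)
  · have hc : expVec κ ∉ NewtonFace h q := by
      intro hc
      apply hJκ
      intro j hj
      have : (κ j : ℝ) = 0 := hface hc j hj
      exact_mod_cast this
    rw [if_neg hc]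
    apply tendsto_const_nhds.congr'
    filter_upwards [hx] with k hk
    rw [mon_zero (fun j hj => (hk j).2 hj) hJκ]
    simp

/-! ### Perturbation -/

theorem mon_perturb {n : ℕ} (x w : Fin n → ℝ) (t : ℝ) (κ : Fin n →₀ ℕ) :
    mon (fun j => x j * Real.exp (t * w j)) κ = mon x κ * Real.exp (t * dotE w κ) := by
  unfold mon dotE
  rw [Finset.mul_sum, Real.exp_sum, ← Finset.prod_mul_distrib]
  apply Finset.prod_congr rfl
  intro j _
  rw [mul_pow, ← Real.exp_nat_mul]
  congr 2
  ring

theorem perturb_decrease {n : ℕ} (h : MvPolynomial (Fin n) ℝ) (x w : Fin n → ℝ)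
    (hneg : ∑ κ ∈ h.support, (h.coeff κ * dotE w κ) * mon x κ < 0) :
    ∀ᶠ t in nhdsWithin (0 : ℝ) (Ioi 0),
      eval (fun j => x j * Real.exp (t * w j)) h < eval x h := by
  have hd : HasDerivAt (fun t : ℝ => eval (fun j => x j * Real.exp (t * w j)) h)
      (∑ κ ∈ h.support, (h.coeff κ * dotE w κ) * mon x κ) 0 := by
    have e : (fun t : ℝ => eval (fun j => x j * Real.exp (t * w j)) h) =
        fun t => ∑ κ ∈ h.support, h.coeff κ * (mon x κ * Real.exp (t * dotE w κ)) := by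
      funext t
      rw [eval_eq_mon]
      simp_rw [mon_perturb]
    rw [e]
    apply HasDerivAt.fun_sum
    intro κ _
    have h1 : HasDerivAt (fun t : ℝ => Real.exp (t * dotE w κ)) (dotE w κ) 0 := by
      have := ((hasDerivAt_id (0 : ℝ)).mul_const (dotE w κ)).exp
      simpa using this
    have h2 := (h1.const_mul (mon x κ)).const_mul (h.coeff κ)
    exact h2.congr_deriv (by ring)
  rw [hasDerivAt_iff_tendsto_slope] at hd
  have hd' := hd.mono_left (nhdsWithin_mono (0 : ℝ)
    (show Ioi (0 : ℝ) ⊆ {0}ᶜ from fun t ht => ne_of_gt ht))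
  filter_upwards [hd'.eventually (gt_mem_nhds hneg), self_mem_nhdsWithin] with t ht ht0
  rw [slope_def_field, div_lt_iff₀ (by simpa using ht0)] at ht
  simp only [zero_mul, Real.exp_zero, mul_one] at ht
  linarith

theorem perturb_continuous {n : ℕ} (h : MvPolynomial (Fin n) ℝ) (x w : Fin n → ℝ)
    (hneg : eval x h < 0) :
    ∀ᶠ t in nhdsWithin (0 : ℝ) (Ioi 0),
      eval (fun j => x j * Real.exp (t * w j)) h < 0 := by
  have hc : Continuous (fun t : ℝ => eval (fun j => x j * Real.exp (t * w j)) h) := by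
    apply (MvPolynomial.continuous_eval h).comp
    fun_prop
  have := hc.tendsto 0
  simp only [zero_mul, Real.exp_zero, mul_one] at this
  exact (this.mono_left nhdsWithin_le_nhds).eventually (gt_mem_nhds hneg)

/-! ### The Gordan alternative -/

theorem gordan {n : ℕ} {ι : Type*} [Fintype ι] (A : Set ι) (hA : A.Nonempty) (a : ι → Fin n → ℝ)
    (hno : ¬ ∃ v : Fin n → ℝ, ∀ i ∈ A, ∑ j, a i j * v j < 0) :
    ∃ lam : ι → ℝ, (∀ i, 0 ≤ lam i) ∧ lam ≠ 0 ∧ (∀ i, i ∉ A → lam i = 0) ∧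
      ∀ j, ∑ i, lam i * a i j = 0 := by
  by_cases h0 : (0 : Fin n → ℝ) ∈ convexHull ℝ (Set.range fun i : A => a i)
  · rw [convexHull_range_eq_exists_affineCombination] at h0
    obtain ⟨s, w, hw, hw1, hw2⟩ := h0
    rw [Finset.affineCombination_eq_linear_combination _ _ _ hw1] at hw2
    set w' : A → ℝ := fun i => if i ∈ s then w i else 0 with hw'
    have hw'0 : ∀ i, 0 ≤ w' i := by
      intro i
      simp only [hw']
      split_ifs with hi
      · exact hw i hi
      · exact le_rfl
    refine ⟨fun i => if hi : i ∈ A then w' ⟨i, hi⟩ else 0, ?_, ?_, ?_, ?_⟩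
    · intro i
      show (0 : ℝ) ≤ (if hi : i ∈ A then w' ⟨i, hi⟩ else 0)
      split_ifs
      · exact hw'0 _
      · exact le_rfl
    · intro hz
      have : ∑ i ∈ s, w i = 0 := by
        apply Finset.sum_eq_zero
        intro i hi
        have := congrFun hz i.1
        simp only [i.2, dif_pos, Pi.zero_apply] at this
        simpa [hw', hi] using this
      linarith
    · intro i hi
      simp [hi]
    · intro j
      have h1 : ∑ i, (if hi : i ∈ A then w' ⟨i, hi⟩ else 0) * a i j =
          ∑ i : A, w' i * a i j := by
        have := Finset.sum_subtype_of_mem (s := Finset.univ.filter (· ∈ A)) (p := (· ∈ A))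
          (fun i => (if hi : i ∈ A then w' ⟨i, hi⟩ else 0) * a i j) (by simp)
        rw [← Finset.sum_subset (Finset.subset_univ (Finset.univ.filter (· ∈ A)))]
        · rw [← this]
          refine Finset.sum_congr ?_ ?_
          · ext i; simp
          · intro i _
            simp
        · intro i _ hi
          have : i ∉ A := by simpa using hi
          simp [this]
      rw [h1]
      have h2 := congrFun hw2 j
      simp only [Finset.sum_apply, Pi.smul_apply, smul_eq_mul, Pi.zero_apply] at h2
      rw [← h2, ← Finset.sum_subset (Finset.subset_univ s)]
      · apply Finset.sum_congr rfl
        intro i hi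
        simp [hw', hi]
      · intro i _ hi
        simp [hw', hi]
  · exfalso
    have hcpt : IsCompact (convexHull ℝ (Set.range fun i : A => a i)) :=
      (Set.finite_range _).isCompact_convexHull ℝ
    obtain ⟨φ, c, h1, h2⟩ := geometric_hahn_banach_closed_point (convex_convexHull ℝ _)
      hcpt.isClosed h0
    apply hno
    refine ⟨fun j => φ (Pi.single j 1), fun i hi => ?_⟩
    have h3 := h1 (a i) (subset_convexHull ℝ _ ⟨⟨i, hi⟩, rfl⟩)
    rw [map_zero] at h2
    have h4 : φ (a i) = ∑ j, a i j * φ (Pi.single j 1) := by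
      conv_lhs => rw [pi_eq_sum_univ' (a i)]
      rw [map_sum]
      apply Finset.sum_congr rfl
      intro j _
      rw [map_smul, smul_eq_mul]
    linarith

/-! ### The main argument -/

/-- The squared Euclidean norm as a polynomial. -/
def sqNorm (n : ℕ) : MvPolynomial (Fin n) ℝ := ∑ j, monomial (Finsupp.single j 2) 1

theorem sqNorm_eval {n : ℕ} (x : Fin n → ℝ) : eval x (sqNorm n) = ∑ j, x j ^ 2 := by
  unfold sqNorm
  rw [map_sum]
  apply Finset.sum_congr rfl
  intro j _
  rw [eval_monomial]
  simp

theorem sqNorm_coeff {n : ℕ} (κ : Fin n →₀ ℕ) :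
    (sqNorm n).coeff κ = ∑ j, if Finsupp.single j 2 = κ then (1 : ℝ) else 0 := by
  unfold sqNorm
  simp [coeff_sum, coeff_monomial]

theorem sqNorm_coeff_nonneg {n : ℕ} (κ : Fin n →₀ ℕ) : 0 ≤ (sqNorm n).coeff κ := by
  rw [sqNorm_coeff]
  apply Finset.sum_nonneg
  intro j _
  split_ifs <;> norm_num

theorem sqNorm_support {n : ℕ} (κ : Fin n →₀ ℕ) :
    κ ∈ (sqNorm n).support ↔ ∃ j, κ = Finsupp.single j 2 := by
  rw [mem_support_iff, sqNorm_coeff]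
  constructor
  · intro h
    obtain ⟨j, _, hj⟩ := Finset.exists_ne_zero_of_sum_ne_zero h
    refine ⟨j, ?_⟩
    by_contra hne
    exact hj (if_neg (fun h' => hne h'.symm))
  · rintro ⟨j, rfl⟩
    apply ne_of_gt
    apply Finset.sum_pos'
    · intro i _
      split_ifs <;> norm_num
    · exact ⟨j, Finset.mem_univ j, by simp⟩

theorem core {n p : ℕ} (f : Fin (p + 1) → MvPolynomial (Fin n) ℝ) (fstar : ℝ)
    (U : Ultrafilter ℕ) (x : ℕ → Fin n → ℝ)
    (hxS : ∀ k, ∀ i, i ≠ 0 → eval (x k) (f i) ≤ 0)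
    (hmin : ∀ k, ∀ y, (∀ i, i ≠ 0 → eval y (f i) ≤ 0) →
      eval y (sqNorm n) ≤ eval (x k) (sqNorm n) → eval (x k) (f 0) ≤ eval y (f 0))
    (hlim0 : Tendsto (fun k => eval (x k) (f 0)) U (nhds fstar))
    (hna : ∀ k, eval (x k) (f 0) ≠ fstar)
    (hunb : ∀ C, ¬ ∀ᶠ k in (U : Filter ℕ), eval (x k) (sqNorm n) ≤ C) :
    ∃ (J : Set (Fin n)) (q xs : Fin n → ℝ), J.Nonempty ∧ (∃ j ∈ J, q j < 0) ∧
      (∀ j, xs j = 0 ↔ j ∉ J) ∧ NotConstOn (f 0) J ∧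
      (∀ i, NotConstOn (f i) J → NewtonFace (f i) q ⊆ RJ J) ∧
      (∀ i, i ≠ 0 → eval xs (facePoly (f i) (NewtonFace (f i) q)) ≤ 0) ∧
      (0 < NewtonD (f 0) q → fstar = 0) ∧
      (NewtonD (f 0) q = 0 → fstar = eval xs (facePoly (f 0) (NewtonFace (f 0) q))) ∧
      (NewtonD (f 0) q < 0 → eval xs (facePoly (f 0) (NewtonFace (f 0) q)) = 0) ∧
      (NewtonD (f 0) q * eval xs (facePoly (f 0) (NewtonFace (f 0) q)) = 0 →
        ¬ ∃ v : Fin n → ℝ, ∀ i, NotConstOn (f i) J →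
          (i = 0 ∨ eval xs (facePoly (f i) (NewtonFace (f i) q)) = 0) →
          ∑ j, eval xs (pderiv j (facePoly (f i) (NewtonFace (f i) q))) * v j < 0) := by
  set F : Finset (Fin n →₀ ℕ) :=
    (Finset.univ.biUnion fun i => (f i).support) ∪ (sqNorm n).support ∪ {0} with hF
  have hFi : ∀ i, (f i).support ⊆ F := by
    intro i κ hκ
    simp only [hF, Finset.mem_union, Finset.mem_biUnion, Finset.mem_univ, true_and]
    exact Or.inl (Or.inl ⟨i, hκ⟩)
  have hFg : (sqNorm n).support ⊆ F := by
    intro κ hκ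
    simp only [hF, Finset.mem_union]
    exact Or.inl (Or.inr hκ)
  obtain ⟨J, q, xs, hxs, hx, hM, hlim⟩ := setup U x F (by simp [hF])
  have FL := fun h hh hne => face_limit U x F J q xs hx hM hlim h hh hne
  have hRJ : ∀ᶠ k in (U : Filter ℕ), x k ∈ RJ J := by
    filter_upwards [hx] with k hk j hj
    exact (hk j).2 hj
  have hnc : ∀ i, NotConstOn (f i) J → ∃ κ ∈ (f i).support, InJ J κ := by
    intro i hi
    by_contra hno
    push Not at hno
    obtain ⟨a, ha, b, hb, hab⟩ := hi
    apply hab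
    have hz : ∀ y ∈ RJ J, eval y (f i) = 0 := by
      intro y hy
      rw [eval_eq_mon]
      apply Finset.sum_eq_zero
      intro κ hκ
      rw [mon_zero hy (hno κ hκ), mul_zero]
    rw [hz a ha, hz b hb]
  -- `J` is nonempty
  have hJ : J.Nonempty := by
    by_contra hJe
    rw [Set.not_nonempty_iff_eq_empty] at hJe
    apply hunb 0
    filter_upwards [hx] with k hk
    rw [sqNorm_eval]
    apply le_of_eq
    apply Finset.sum_eq_zero
    intro j _
    rw [(hk j).2 (by simp [hJe])]
    norm_num
  have hgne : ∃ κ ∈ (sqNorm n).support, InJ J κ := by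
    obtain ⟨j, hj⟩ := hJ
    refine ⟨Finsupp.single j 2, (sqNorm_support _).2 ⟨j, rfl⟩, ?_⟩
    intro i hi
    have : j ≠ i := fun h => hi (h ▸ hj)
    simp [this]
  obtain ⟨hgF, ⟨κg, hκg, hκgJ, hκgΔ⟩, hgD, sg, hsg, hsg0, hsgn, hsgp, hgl⟩ :=
    FL (sqNorm n) hFg hgne
  have hglim := hgl (fun κ => (sqNorm n).coeff κ)
  have hgpos : 0 < ∑ κ ∈ (sqNorm n).support.filter (fun κ => expVec κ ∈ NewtonFace (sqNorm n) q),
      (sqNorm n).coeff κ * mon xs κ := by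
    apply Finset.sum_pos'
    · intro κ hκ
      obtain ⟨j, rfl⟩ := (sqNorm_support κ).1 (Finset.mem_filter.1 hκ).1
      rw [mon_single]
      exact mul_nonneg (sqNorm_coeff_nonneg _) (sq_nonneg _)
    · refine ⟨κg, Finset.mem_filter.2 ⟨hκg, hκgΔ⟩, ?_⟩
      obtain ⟨j, rfl⟩ := (sqNorm_support κg).1 hκg
      have hj : j ∈ J := by
        by_contra hj
        have := hκgJ j hj
        simp at this
      have h1 : xs j ≠ 0 := fun h => (hxs j).1 h hj
      have h2 : (sqNorm n).coeff (Finsupp.single j 2) ≠ 0 := mem_support_iff.1 hκg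
      rw [mon_single]
      exact mul_pos (lt_of_le_of_ne (sqNorm_coeff_nonneg _) h2.symm) (by positivity)
  -- limits `h (x k) = s k * (h (x k) / s k)`
  have hback : ∀ (h : MvPolynomial (Fin n) ℝ) (s : ℕ → ℝ) (a l : ℝ), (∀ k, 0 < s k) →
      Tendsto s U (nhds a) →
      Tendsto (fun k => (∑ κ ∈ h.support, h.coeff κ * mon (x k) κ) / s k) U (nhds l) →
      Tendsto (fun k => eval (x k) h) U (nhds (l * a)) := by
    intro h s a l hs hsa hl
    refine (hl.mul hsa).congr fun k => ?_
    rw [eval_eq_mon, div_mul_cancel₀ _ (hs k).ne']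
  have hgneg : NewtonD (sqNorm n) q < 0 := by
    by_contra hnn
    have : ∃ l, Tendsto (fun k => eval (x k) (sqNorm n)) U (nhds l) := by
      rcases (not_lt.1 hnn).eq_or_lt with h | h
      · exact ⟨_, hback _ sg 1 _ hsg (hsg0 h.symm) hglim⟩
      · exact ⟨_, hback _ sg 0 _ hsg (hsgp h) hglim⟩
    obtain ⟨l, hl⟩ := this
    apply hunb (l + 1)
    filter_upwards [hl.eventually (gt_mem_nhds (lt_add_one l))] with k hk
    exact hk.le
  have hqneg : ∃ j ∈ J, q j < 0 := by
    have h1 := hgD κg hκg hκgΔ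
    obtain ⟨j, rfl⟩ := (sqNorm_support κg).1 hκg
    have hj : j ∈ J := by
      by_contra hj
      have := hκgJ j hj
      simp at this
    refine ⟨j, hj, ?_⟩
    rw [← h1] at hgneg
    have h2 : dotE q (Finsupp.single j 2) = q j * 2 := by
      unfold dotE
      rw [Finset.sum_eq_single j]
      · simp
      · intro i _ hi
        simp [hi.symm]
      · simp
    rw [h2] at hgneg
    linarith
  have hnc0 : NotConstOn (f 0) J := by
    by_contra hc
    unfold NotConstOn at hc
    push Not at hc
    obtain ⟨k₀, hk₀⟩ := hRJ.exists
    have : Tendsto (fun k => eval (x k) (f 0)) U (nhds (eval (x k₀) (f 0))) := by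
      apply tendsto_const_nhds.congr'
      filter_upwards [hRJ] with k hk
      exact hc _ hk₀ _ hk
    exact hna k₀ (tendsto_nhds_unique this hlim0)
  obtain ⟨h0F, -, h0D, s0, hs0, hs00, hs0n, hs0p, h0l⟩ := FL (f 0) (hFi 0) (hnc 0 hnc0)
  have h0lim := h0l (fun κ => (f 0).coeff κ)
  rw [← eval_facePoly] at h0lim
  refine ⟨J, q, xs, hJ, hqneg, hxs, hnc0, fun i hi => (FL (f i) (hFi i) (hnc i hi)).1,
    ?_, ?_, ?_, ?_, ?_⟩
  · intro i hi
    by_cases hne : ∃ κ ∈ (f i).support, InJ J κ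
    · obtain ⟨-, -, -, s, hs, -, -, -, hl⟩ := FL (f i) (hFi i) hne
      have hl := hl (fun κ => (f i).coeff κ)
      rw [← eval_facePoly] at hl
      refine le_of_tendsto hl (Eventually.of_forall fun k => ?_)
      have := hxS k i hi
      rw [eval_eq_mon] at this
      exact div_nonpos_of_nonpos_of_nonneg this (hs k).le
    · push Not at hne
      rw [eval_facePoly]
      apply le_of_eq
      apply Finset.sum_eq_zero
      intro κ hκ
      rw [mon_zero (fun j hj => (hxs j).2 hj) (hne κ (Finset.mem_filter.1 hκ).1), mul_zero]
  · intro h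
    have := hback _ s0 0 _ hs0 (hs0p h) h0lim
    rw [mul_zero] at this
    exact tendsto_nhds_unique hlim0 this
  · intro h
    have := hback _ s0 1 _ hs0 (hs00 h) h0lim
    rw [mul_one] at this
    exact tendsto_nhds_unique hlim0 this
  · intro h
    have h1 := hlim0.div_atTop (hs0n h)
    refine tendsto_nhds_unique (h0lim.congr fun k => ?_) h1
    rw [eval_eq_mon]
  · rintro hd0 ⟨v, hv⟩
    set w0 : Fin n → ℝ := fun j => v j / xs j with hw0
    -- Euler correction
    set dg := NewtonD (sqNorm n) q *
      ∑ κ ∈ (sqNorm n).support.filter (fun κ => expVec κ ∈ NewtonFace (sqNorm n) q),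
      (sqNorm n).coeff κ * mon xs κ with hdg
    have hdgneg : dg < 0 := mul_neg_of_neg_of_pos hgneg hgpos
    set A := ∑ κ ∈ (sqNorm n).support.filter (fun κ => expVec κ ∈ NewtonFace (sqNorm n) q),
      ((sqNorm n).coeff κ * dotE w0 κ) * mon xs κ with hA
    obtain ⟨C, hC⟩ : ∃ C : ℝ, A + C * dg < 0 := by
      refine ⟨(A + 1) / (-dg), ?_⟩
      have : (A + 1) / (-dg) * dg = -(A + 1) := by
        have := hdgneg.ne
        field_simp
      rw [this]
      linarith
    set w : Fin n → ℝ := fun j => w0 j + C * q j with hw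
    have hdw : ∀ κ, dotE w κ = dotE w0 κ + C * dotE q κ := by
      intro κ
      simp only [dotE, hw, Finset.mul_sum, ← Finset.sum_add_distrib]
      apply Finset.sum_congr rfl
      intro j _
      ring
    have euler : ∀ h : MvPolynomial (Fin n) ℝ,
        (∀ κ ∈ h.support, expVec κ ∈ NewtonFace h q → dotE q κ = NewtonD h q) →
        ∑ κ ∈ h.support.filter (fun κ => expVec κ ∈ NewtonFace h q),
          (h.coeff κ * dotE w κ) * mon xs κ =
        ∑ κ ∈ h.support.filter (fun κ => expVec κ ∈ NewtonFace h q),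
          (h.coeff κ * dotE w0 κ) * mon xs κ + C * (NewtonD h q *
        ∑ κ ∈ h.support.filter (fun κ => expVec κ ∈ NewtonFace h q),
          h.coeff κ * mon xs κ) := by
      intro h hh
      rw [Finset.mul_sum, Finset.mul_sum, ← Finset.sum_add_distrib]
      apply Finset.sum_congr rfl
      intro κ hκ
      obtain ⟨h1, h2⟩ := Finset.mem_filter.1 hκ
      rw [hdw, hh κ h1 h2]
      ring
    have neg_of : ∀ (h : MvPolynomial (Fin n) ℝ) (s : ℕ → ℝ) (b : (Fin n →₀ ℕ) → ℝ) (l : ℝ),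
        (∀ k, 0 < s k) → l < 0 →
        Tendsto (fun k => (∑ κ ∈ h.support, b κ * mon (x k) κ) / s k) U (nhds l) →
        ∀ᶠ k in (U : Filter ℕ), ∑ κ ∈ h.support, b κ * mon (x k) κ < 0 := by
      intro h s b l hs hl ht
      filter_upwards [ht.eventually (gt_mem_nhds hl)] with k hk
      by_contra hcon
      exact absurd hk (not_lt.2 (div_nonneg (not_lt.1 hcon) (hs k).le))
    -- the norm decreases
    have ev1 : ∀ᶠ k in (U : Filter ℕ), ∑ κ ∈ (sqNorm n).support,
        ((sqNorm n).coeff κ * dotE w κ) * mon (x k) κ < 0 := by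
      refine neg_of (sqNorm n) sg _ _ hsg ?_ (hgl (fun κ => (sqNorm n).coeff κ * dotE w κ))
      rw [euler _ hgD]
      exact hC
    -- active functions decrease
    have ev2 : ∀ i, NotConstOn (f i) J →
        (i = 0 ∨ eval xs (facePoly (f i) (NewtonFace (f i) q)) = 0) →
        ∀ᶠ k in (U : Filter ℕ), ∑ κ ∈ (f i).support,
          ((f i).coeff κ * dotE w κ) * mon (x k) κ < 0 := by
      intro i hi ha
      obtain ⟨hiF, -, hiD, s, hs, -, -, -, hl⟩ := FL (f i) (hFi i) (hnc i hi)
      refine neg_of (f i) s _ _ hs ?_ (hl (fun κ => (f i).coeff κ * dotE w κ))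
      rw [euler _ hiD, dir_deriv (f i) hiF xs v hxs, ← eval_facePoly]
      have hz : NewtonD (f i) q * eval xs (facePoly (f i) (NewtonFace (f i) q)) = 0 := by
        rcases ha with rfl | ha
        · exact hd0
        · rw [ha, mul_zero]
      rw [hz, mul_zero, add_zero]
      exact hv i hi ha
    -- inactive functions are strictly negative
    have ev3 : ∀ i, i ≠ 0 → NotConstOn (f i) J →
        eval xs (facePoly (f i) (NewtonFace (f i) q)) < 0 →
        ∀ᶠ k in (U : Filter ℕ), eval (x k) (f i) < 0 := by
      intro i _ hi ha
      obtain ⟨hiF, -, hiD, s, hs, -, -, -, hl⟩ := FL (f i) (hFi i) (hnc i hi)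
      have hl := hl (fun κ => (f i).coeff κ)
      rw [← eval_facePoly] at hl
      filter_upwards [neg_of (f i) s _ _ hs ha hl] with k hk
      rw [eval_eq_mon]
      exact hk
    have ev4 : ∀ᶠ k in (U : Filter ℕ), ∀ i, NotConstOn (f i) J →
        (∑ κ ∈ (f i).support, ((f i).coeff κ * dotE w κ) * mon (x k) κ < 0) ∨
          (i ≠ 0 ∧ eval (x k) (f i) < 0) := by
      rw [Filter.eventually_all]
      intro i
      by_cases hi : NotConstOn (f i) J
      swap
      · exact Eventually.of_forall fun k h => absurd h hi
      by_cases ha : (i = 0 ∨ eval xs (facePoly (f i) (NewtonFace (f i) q)) = 0)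
      · filter_upwards [ev2 i hi ha] with k hk _
        exact Or.inl hk
      · push Not at ha
        have hle : eval xs (facePoly (f i) (NewtonFace (f i) q)) ≤ 0 := by
          obtain ⟨-, -, -, s, hs, -, -, -, hl⟩ := FL (f i) (hFi i) (hnc i hi)
          have hl := hl (fun κ => (f i).coeff κ)
          rw [← eval_facePoly] at hl
          refine le_of_tendsto hl (Eventually.of_forall fun k => ?_)
          have := hxS k i ha.1
          rw [eval_eq_mon] at this
          exact div_nonpos_of_nonpos_of_nonneg this (hs k).le
        filter_upwards [ev3 i ha.1 hi (lt_of_le_of_ne hle ha.2)] with k hk _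
        exact Or.inr ⟨ha.1, hk⟩
    obtain ⟨k, ⟨hk1, hk4⟩, hkR⟩ := ((ev1.and ev4).and hRJ).exists
    have hyR : ∀ t : ℝ, (fun j => x k j * Real.exp (t * w j)) ∈ RJ J := by
      intro t j hj
      show x k j * _ = 0
      rw [hkR j hj, zero_mul]
    have t1 := perturb_decrease (sqNorm n) (x k) w hk1
    have t2 : ∀ᶠ t in nhdsWithin (0 : ℝ) (Ioi 0), ∀ i, i ≠ 0 →
        eval (fun j => x k j * Real.exp (t * w j)) (f i) ≤ 0 := by
      rw [Filter.eventually_all]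
      intro i
      by_cases hi : NotConstOn (f i) J
      · rcases hk4 i hi with h | ⟨_, h⟩
        · filter_upwards [perturb_decrease (f i) (x k) w h] with t ht hi0
          exact ht.le.trans (hxS k i hi0)
        · filter_upwards [perturb_continuous (f i) (x k) w h] with t ht _
          exact ht.le
      · refine Eventually.of_forall fun t hi0 => ?_
        unfold NotConstOn at hi
        push Not at hi
        rw [hi _ (hyR t) _ hkR]
        exact hxS k i hi0
    have t3 : ∀ᶠ t in nhdsWithin (0 : ℝ) (Ioi 0),
        eval (fun j => x k j * Real.exp (t * w j)) (f 0) < eval (x k) (f 0) := by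
      rcases hk4 0 hnc0 with h | ⟨h, _⟩
      · exact perturb_decrease (f 0) (x k) w h
      · exact absurd rfl h
    obtain ⟨t, ⟨ht1, ht2⟩, ht3⟩ := ((t1.and t2).and t3).exists
    exact absurd (hmin k _ ht2 ht1.le) (not_le.2 ht3)

theorem sqNorm_compact (n : ℕ) (C : ℝ) : IsCompact {x : Fin n → ℝ | eval x (sqNorm n) ≤ C} := by
  apply Metric.isCompact_of_isClosed_isBounded
  · exact isClosed_le (MvPolynomial.continuous_eval _) continuous_const
  · rw [isBounded_iff_forall_norm_le]
    refine ⟨C + 1, fun x hx => ?_⟩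
    have hx : eval x (sqNorm n) ≤ C := hx
    rw [sqNorm_eval] at hx
    have hC : 0 ≤ C := (Finset.sum_nonneg fun j _ => sq_nonneg (x j)).trans hx
    rw [pi_norm_le_iff_of_nonneg (by linarith)]
    intro j
    have h1 := Finset.single_le_sum (f := fun j => x j ^ 2)
      (fun j (_ : j ∈ Finset.univ) => sq_nonneg (x j)) (Finset.mem_univ j)
    rw [Real.norm_eq_abs]
    apply abs_le_of_sq_le_sq _ (by linarith)
    nlinarith

theorem exists_seq {n p : ℕ} (f : Fin (p + 1) → MvPolynomial (Fin n) ℝ)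
    (S : Set (Fin n → ℝ)) (hS : S = {x | ∀ i, i ≠ 0 → eval x (f i) ≤ 0})
    (hSne : S.Nonempty) (hbdd : BddBelow ((fun x => eval x (f 0)) '' S))
    (fstar : ℝ) (hfstar : fstar = sInf ((fun x => eval x (f 0)) '' S))
    (hnotatt : ∀ x ∈ S, eval x (f 0) ≠ fstar) :
    ∃ (U : Ultrafilter ℕ) (x : ℕ → Fin n → ℝ), (∀ k, x k ∈ S) ∧
      (∀ k, ∀ y ∈ S, eval y (sqNorm n) ≤ eval (x k) (sqNorm n) →
        eval (x k) (f 0) ≤ eval y (f 0)) ∧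
      Tendsto (fun k => eval (x k) (f 0)) U (nhds fstar) ∧
      (∀ C, ¬ ∀ᶠ k in (U : Filter ℕ), eval (x k) (sqNorm n) ≤ C) := by
  have hScl : IsClosed S := by
    rw [hS]
    simp only [Set.ofPred_forall]
    refine isClosed_iInter fun i => isClosed_iInter fun _ => ?_
    exact isClosed_le (MvPolynomial.continuous_eval _) continuous_const
  obtain ⟨z, hz⟩ := hSne
  have hex : ∀ k : ℕ, ∃ x ∈ S, eval x (sqNorm n) ≤ k + eval z (sqNorm n) ∧
      ∀ y ∈ S, eval y (sqNorm n) ≤ k + eval z (sqNorm n) → eval x (f 0) ≤ eval y (f 0) := by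
    intro k
    have hc : IsCompact (S ∩ {x | eval x (sqNorm n) ≤ k + eval z (sqNorm n)}) :=
      (sqNorm_compact n _).inter_left hScl
    obtain ⟨x, hx, hxm⟩ := hc.exists_isMinOn ⟨z, hz, by simp⟩
      (MvPolynomial.continuous_eval (f 0)).continuousOn
    exact ⟨x, hx.1, hx.2, fun y hy hy2 => hxm ⟨hy, hy2⟩⟩
  choose x hxS hxn hxm using hex
  have hlow : ∀ y ∈ S, fstar ≤ eval y (f 0) := by
    intro y hy
    rw [hfstar]
    exact csInf_le hbdd ⟨y, hy, rfl⟩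
  have hlim : Tendsto (fun k => eval (x k) (f 0)) (hyperfilter ℕ : Filter ℕ) (nhds fstar) := by
    refine Tendsto.mono_left ?_ Nat.hyperfilter_le_atTop
    rw [tendsto_order]
    constructor
    · intro a ha
      exact Eventually.of_forall fun k => ha.trans_le (hlow _ (hxS k))
    · intro a ha
      rw [hfstar] at ha
      obtain ⟨_, ⟨y, hy, rfl⟩, hya⟩ := exists_lt_of_csInf_lt
        (Set.Nonempty.image (fun x => eval x (f 0)) (⟨z, hz⟩ : S.Nonempty)) ha
      obtain ⟨K, hK⟩ := exists_nat_ge (eval y (sqNorm n) - eval z (sqNorm n))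
      filter_upwards [eventually_ge_atTop K] with k hk
      refine lt_of_le_of_lt (hxm k y hy ?_) hya
      have : (K : ℝ) ≤ k := by exact_mod_cast hk
      linarith
  refine ⟨hyperfilter ℕ, x, hxS, fun k y hy hyn => hxm k y hy (hyn.trans (hxn k)), hlim, ?_⟩
  intro C hC
  have hc : IsCompact (S ∩ {x | eval x (sqNorm n) ≤ C}) := (sqNorm_compact n _).inter_left hScl
  obtain ⟨l, hl, hl2⟩ := hc.ultrafilter_le_nhds (Ultrafilter.map x (hyperfilter ℕ)) (by
    rw [Filter.le_principal_iff]
    exact hC.mono fun k hk => ⟨hxS k, hk⟩)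
  have hl3 : Tendsto x (hyperfilter ℕ : Filter ℕ) (nhds l) := hl2
  have := ((MvPolynomial.continuous_eval (f 0)).tendsto l).comp hl3
  exact hnotatt l hl.1 (tendsto_nhds_unique this hlim)

/-- **Theorem 3.1 (Fritz-John and Karush–Kuhn–Tucker optimality conditions at infinity).** -/
theorem kkt_at_infinity {n p : ℕ} (f : Fin (p + 1) → MvPolynomial (Fin n) ℝ)
    (hnc : ∀ i, ∃ x y : Fin n → ℝ, eval x (f i) ≠ eval y (f i))
    (S : Set (Fin n → ℝ))
    (hS : S = {x | ∀ i, i ≠ 0 → eval x (f i) ≤ 0})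
    (hSne : S.Nonempty)
    (hbdd : BddBelow ((fun x => eval x (f 0)) '' S))
    (fstar : ℝ) (hfstar : fstar = sInf ((fun x => eval x (f 0)) '' S))
    (hMF : MFinfty f)
    (hnotatt : ∀ x ∈ S, eval x (f 0) ≠ fstar) :
    fstar = 0 ∨
      ∃ (J : Set (Fin n)) (q xs : Fin n → ℝ) (lam : Fin (p + 1) → ℝ),
        J.Nonempty ∧
        (∃ j ∈ J, q j < 0) ∧
        -- (i)
        (∀ j, xs j = 0 ↔ j ∉ J) ∧
        -- (ii)
        (fstar = eval xs (facePoly (f 0) (NewtonFace (f 0) q)) ∧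
          NewtonFace (f 0) q ⊆ RJ J ∧ NewtonD (f 0) q = 0) ∧
        -- (iii)
        (∀ j : Fin n,
          ∑ i, lam i * eval xs (pderiv j (facePoly (f i) (NewtonFace (f i) q))) = 0) ∧
        -- (iv)
        (∀ i, i ≠ 0 → eval xs (facePoly (f i) (NewtonFace (f i) q)) ≤ 0 ∧
          lam i * eval xs (facePoly (f i) (NewtonFace (f i) q)) = 0) ∧
        -- (v)
        ((∀ i, 0 ≤ lam i) ∧ lam ≠ 0) ∧
        -- moreover, under the constraint qualification the multipliers can be chosen
        -- with `λ*₀ = 1`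
        ((∃ v : Fin n → ℝ, v ≠ 0 ∧ ∀ i, i ≠ 0 →
            eval xs (facePoly (f i) (NewtonFace (f i) q)) = 0 → NotConstOn (f i) J →
            ∑ j, eval xs (pderiv j (facePoly (f i) (NewtonFace (f i) q))) * v j < 0) →
          ∃ lam' : Fin (p + 1) → ℝ,
            lam' 0 = 1 ∧
            (∀ j : Fin n,
              ∑ i, lam' i * eval xs (pderiv j (facePoly (f i) (NewtonFace (f i) q))) = 0) ∧
            (∀ i, i ≠ 0 → eval xs (facePoly (f i) (NewtonFace (f i) q)) ≤ 0 ∧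
              lam' i * eval xs (facePoly (f i) (NewtonFace (f i) q)) = 0) ∧
            (∀ i, 0 ≤ lam' i)) := by
  obtain ⟨U, x, hxS, hmin, hlim, hunb⟩ := exists_seq f S hS hSne hbdd fstar hfstar hnotatt
  have hxS' : ∀ k, ∀ i, i ≠ 0 → eval (x k) (f i) ≤ 0 := fun k => by
    have := hxS k
    rw [hS] at this
    exact this
  obtain ⟨J, q, xs, hJ, hq, hxs, hnc0, hface, hle, hpos, hzero, hneg, hno⟩ :=
    core f fstar U x hxS' (fun k y hy => hmin k y (by rw [hS]; exact hy)) hlim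
      (fun k => hnotatt _ (hxS k)) hunb
  rcases lt_trichotomy (NewtonD (f 0) q) 0 with hd | hd | hd
  · exfalso
    obtain ⟨v, _, hv⟩ := hMF J hJ q xs hd hface hxs hle
    apply hno (by rw [hneg hd, mul_zero])
    refine ⟨v, fun i hi ha => hv i hi ?_⟩
    rcases ha with rfl | ha
    · exact hneg hd
    · exact ha
  · right
    have hno' := hno (by rw [hd, zero_mul])
    obtain ⟨lam, hlam0, hlamne, hlamA, hlam⟩ := gordan
      {i | NotConstOn (f i) J ∧ (i = 0 ∨ eval xs (facePoly (f i) (NewtonFace (f i) q)) = 0)}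
      ⟨0, hnc0, Or.inl rfl⟩
      (fun i j => eval xs (pderiv j (facePoly (f i) (NewtonFace (f i) q))))
      (by
        rintro ⟨v, hv⟩
        exact hno' ⟨v, fun i hi ha => hv i ⟨hi, ha⟩⟩)
    have hcomp : ∀ i, i ≠ 0 →
        lam i * eval xs (facePoly (f i) (NewtonFace (f i) q)) = 0 := by
      intro i hi
      by_cases hA : NotConstOn (f i) J ∧
          (i = 0 ∨ eval xs (facePoly (f i) (NewtonFace (f i) q)) = 0)
      · rw [hA.2.resolve_left hi, mul_zero]
      · rw [hlamA i hA, zero_mul]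
    refine ⟨J, q, xs, lam, hJ, hq, hxs, ⟨hzero hd, hface 0 hnc0, hd⟩, hlam,
      fun i hi => ⟨hle i hi, hcomp i hi⟩, ⟨hlam0, hlamne⟩, ?_⟩
    rintro ⟨v, _, hv⟩
    have hl0 : 0 < lam 0 := by
      refine lt_of_le_of_ne (hlam0 0) fun h0 => ?_
      have hs : ∑ i, lam i *
          ∑ j, eval xs (pderiv j (facePoly (f i) (NewtonFace (f i) q))) * v j = 0 := by
        have h1 : ∑ j, (∑ i, lam i *
            eval xs (pderiv j (facePoly (f i) (NewtonFace (f i) q)))) * v j = 0 :=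
          Finset.sum_eq_zero fun j _ => by rw [hlam j, zero_mul]
        rw [← h1]
        simp_rw [Finset.mul_sum, Finset.sum_mul]
        rw [Finset.sum_comm]
        exact Finset.sum_congr rfl fun j _ => Finset.sum_congr rfl fun i _ => by ring
      have hlt : ∀ i, lam i ≠ 0 →
          ∑ j, eval xs (pderiv j (facePoly (f i) (NewtonFace (f i) q))) * v j < 0 := by
        intro i hi
        have hi0 : i ≠ 0 := by
          rintro rfl
          exact hi h0.symm
        have hA : NotConstOn (f i) J ∧
          (i = 0 ∨ eval xs (facePoly (f i) (NewtonFace (f i) q)) = 0) := by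
          by_contra hA
          exact hi (hlamA i hA)
        exact hv i hi0 (hA.2.resolve_left hi0) hA.1
      have hterm : ∀ i ∈ Finset.univ, lam i *
          ∑ j, eval xs (pderiv j (facePoly (f i) (NewtonFace (f i) q))) * v j ≤ 0 := by
        intro i _
        by_cases hi : lam i = 0
        · rw [hi, zero_mul]
        · exact mul_nonpos_of_nonneg_of_nonpos (hlam0 i) (hlt i hi).le
      apply hlamne
      funext i
      by_contra hi
      have h3 := (Finset.sum_eq_zero_iff_of_nonpos hterm).1 hs i (Finset.mem_univ i)
      rcases mul_eq_zero.1 h3 with h4 | h4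
      · exact hi h4
      · exact absurd h4 (hlt i hi).ne
    refine ⟨fun i => lam i / lam 0, div_self hl0.ne', ?_, ?_, ?_⟩
    · intro j
      have h1 := hlam j
      have h2 : ∑ i, lam i / lam 0 *
          eval xs (pderiv j (facePoly (f i) (NewtonFace (f i) q))) =
          (∑ i, lam i * eval xs (pderiv j (facePoly (f i) (NewtonFace (f i) q)))) / lam 0 := by
        rw [Finset.sum_div]
        exact Finset.sum_congr rfl fun i _ => by ring
      rw [h2, h1, zero_div]
    · intro i hi
      refine ⟨hle i hi, ?_⟩
      rw [div_mul_eq_mul_div, hcomp i hi, zero_div]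
    · intro i
      exact div_nonneg (hlam0 i) hl0.le
  · exact Or.inl (hpos hd)
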